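/- Let a group G act by automorphisms on a median graph 𝒢 endowed with a cubical orientation o, with every element of G preserving o, and suppose some orbit is bounded: there exist a vertex x and N ∈ ℕ with dist(x, g·x) ≤ N for all g ∈ G. Then G fixes a vertex: there is a vertex v of 𝒢 with g·v = v for every g ∈ G. -/

import Mathlib

/-- `m` is a median of `x`, `y`, `z` in the graph `G`. -/
def IsMedianOf {V : Type*} (G : SimpleGraph V) (m x y z : V) : Prop :=
  G.dist x y = G.dist x m + G.dist m y ∧
  G.dist y z = G.dist y m + G.dist m z ∧
  G.dist x z = G.dist x m + G.dist m z

/-- A median graph: connected, and every triple of vertices has a unique median. -/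
def MedianGraph {V : Type*} (G : SimpleGraph V) : Prop :=
  G.Connected ∧ ∀ x y z : V, ∃! m : V, IsMedianOf G m x y z

/-- A cubical orientation: to every ordered pair of adjacent vertices it assigns a
Boolean, with opposite values on the two orderings, and equal values on
square-opposite edges (with consistent orderings). -/
def CubicalOrientation {V : Type*} (G : SimpleGraph V) (o : V → V → Bool) : Prop :=
  (∀ u v : V, G.Adj u v → o u v ≠ o v u) ∧
  (∀ a b c d : V, a ≠ b → a ≠ c → a ≠ d → b ≠ c → b ≠ d → c ≠ d →
    G.Adj a b → G.Adj c d → G.Adj a c → G.Adj b d → o a b = o c d)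

/-!
Fix the vertex `x` of the bounded orbit. The indicator function `a` of the halfspaces containing `x`
moves by a square-summable function of norm at most `√(2N)` under each group element, since only
finitely many halfspaces separate two vertices. The group therefore acts by isometries on the affine
Hilbert space `a + ℓ²`, with a bounded orbit, and the Chebyshev centre of that orbit relative to its
closed convex hull (taken pointwise) is an invariant weight `c` on halfspaces. Being a limit of
convex combinations of indicators of vertices, `c` is monotone and gives complementary halfspaces
total weight `1`; as `c - a` is square-summable, only finitely many halfspaces have weight exactly
`1 / 2`, and only finitely many of weight at least `1 / 2` miss `x`.

Choosing the heavier side of every complementary pair is nearly the choice of a vertex. Ties are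
broken by counting the tied halfspaces contained in each side, which is strictly monotone, and, when
the counts agree, by the orientation. The result is an invariant ultrafilter of halfspaces differing
from the one of `x` finitely often, and such an ultrafilter consists of the halfspaces containing
some vertex, which is then fixed.
-/

open scoped Pointwise

section Distance

variable {V : Type*} {G : SimpleGraph V}

theorem exists_adj_dist_eq_dist_add_one (hG : G.Connected) {u v : V} (huv : u ≠ v) :
    ∃ w, G.Adj u w ∧ G.dist u v = G.dist w v + 1 := by
  obtain ⟨p, hp⟩ := hG.exists_walk_length_eq_dist u v
  cases p with
  | nil => exact absurd rfl huv
  | @cons _ w _ huw q =>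
    have hle : G.dist w v ≤ q.length := SimpleGraph.dist_le q
    have htri := hG.dist_triangle (u := u) (v := w) (w := v)
    rw [SimpleGraph.dist_eq_one_iff_adj.2 huw] at htri
    rw [SimpleGraph.Walk.length_cons] at hp
    exact ⟨w, huw, by omega⟩

end Distance

namespace MedianGraph

variable {V : Type*} {G : SimpleGraph V}

theorem dist_eq_add_one_or_of_adj (hG : MedianGraph G) {a b : V} (hab : G.Adj a b) (z : V) :
    G.dist z b = G.dist z a + 1 ∨ G.dist z a = G.dist z b + 1 := by
  obtain ⟨m, ⟨h₁, h₂, h₃⟩, -⟩ := hG.2 a b z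
  rw [SimpleGraph.dist_eq_one_iff_adj.2 hab] at h₁
  rw [G.dist_comm (u := z), G.dist_comm (u := z)]
  rw [G.dist_comm (u := b) (v := m)] at h₂
  omega

theorem dist_eq_two_of_common_adj (hG : MedianGraph G) {x y c : V} (hx : G.Adj x c) (hy : G.Adj y c)
    (hxy : x ≠ y) : G.dist x y = 2 := by
  have hpos := hG.1.pos_dist_of_ne hxy
  have hxc := SimpleGraph.dist_eq_one_iff_adj.2 hx
  have hpar := hG.dist_eq_add_one_or_of_adj hy x
  omega

theorem eq_of_adj_of_pairwise_ne (hG : MedianGraph G) {u v x y z : V}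
    (hux : G.Adj u x) (huy : G.Adj u y) (huz : G.Adj u z)
    (hvx : G.Adj v x) (hvy : G.Adj v y) (hvz : G.Adj v z)
    (hxy : x ≠ y) (hyz : y ≠ z) (hxz : x ≠ z) : u = v := by
  have isMedian {w : V} (hx : G.Adj w x) (hy : G.Adj w y) (hz : G.Adj w z) :
      IsMedianOf G w x y z := by
    simp only [IsMedianOf, hG.dist_eq_two_of_common_adj hx.symm hy.symm hxy,
      hG.dist_eq_two_of_common_adj hy.symm hz.symm hyz,
      hG.dist_eq_two_of_common_adj hx.symm hz.symm hxz,
      SimpleGraph.dist_eq_one_iff_adj.2 hx.symm, SimpleGraph.dist_eq_one_iff_adj.2 hy.symm,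
      SimpleGraph.dist_eq_one_iff_adj.2 hy, SimpleGraph.dist_eq_one_iff_adj.2 hz, and_self]
  exact (hG.2 x y z).unique (isMedian hux huy huz) (isMedian hvx hvy hvz)

/-- The quadrangle condition. -/
theorem exists_common_adj_of_dist_eq (hG : MedianGraph G) {c x y z : V}
    (hx : G.Adj c x) (hy : G.Adj c y) (hxy : x ≠ y)
    (hzx : G.dist z c = G.dist z x + 1) (hzy : G.dist z c = G.dist z y + 1) :
    ∃ m, G.Adj x m ∧ G.Adj y m ∧ G.dist z x = G.dist z m + 1 := by
  obtain ⟨m, ⟨h₁, h₂, h₃⟩, -⟩ := hG.2 x y z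
  rw [hG.dist_eq_two_of_common_adj hx.symm hy.symm hxy] at h₁
  rw [G.dist_comm (u := m) (v := y)] at h₁
  rw [G.dist_comm (u := y) (v := z)] at h₂
  rw [G.dist_comm (u := x) (v := z)] at h₃
  rw [G.dist_comm (u := m) (v := z)] at h₂ h₃
  exact ⟨m, SimpleGraph.dist_eq_one_iff_adj.1 (by omega),
    SimpleGraph.dist_eq_one_iff_adj.1 (by omega), by omega⟩

end MedianGraph

section Halfspaces

variable {V : Type*} {G : SimpleGraph V}

/-- The halfspace bounded by an oriented edge: the vertices closer to its origin than to its
endpoint. -/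
def halfspace (e : G.Dart) : Set V := {z | G.dist z e.fst < G.dist z e.snd}

variable (G) in
/-- The collection of all halfspaces, as a set of vertex sets: parallel edges give the same
element. -/
def halfspaces : Set (Set V) := Set.range (halfspace (G := G))

/-- Oriented edges that are opposite sides of a square and point in the same direction. -/
def SquareOpposite (e f : G.Dart) : Prop :=
  G.Adj e.fst f.fst ∧ G.Adj e.snd f.snd ∧ e.fst ≠ f.snd ∧ e.snd ≠ f.fst

theorem SquareOpposite.symm {e f : G.Dart} (h : SquareOpposite e f) : SquareOpposite f e :=
  ⟨h.1.symm, h.2.1.symm, h.2.2.2.symm, h.2.2.1.symm⟩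

theorem fst_mem_halfspace (e : G.Dart) : e.fst ∈ halfspace e := by
  simp [halfspace, SimpleGraph.dist_eq_one_iff_adj.2 e.adj]

theorem snd_notMem_halfspace (e : G.Dart) : e.snd ∉ halfspace e := by
  simp [halfspace]

theorem nonempty_of_mem_halfspaces {W : Set V} (hW : W ∈ halfspaces G) : W.Nonempty := by
  obtain ⟨e, rfl⟩ := hW
  exact ⟨e.fst, fst_mem_halfspace e⟩

namespace MedianGraph

theorem compl_halfspace (hG : MedianGraph G) (e : G.Dart) :
    (halfspace e)ᶜ = halfspace e.symm := by
  ext z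
  have hpar := hG.dist_eq_add_one_or_of_adj e.adj z
  change ¬ G.dist z e.fst < G.dist z e.snd ↔ G.dist z e.snd < G.dist z e.fst
  omega

theorem compl_mem_halfspaces (hG : MedianGraph G) {W : Set V} (hW : W ∈ halfspaces G) :
    Wᶜ ∈ halfspaces G := by
  obtain ⟨e, rfl⟩ := hW
  exact ⟨e.symm, (hG.compl_halfspace e).symm⟩

theorem exists_mem_halfspaces_separating (hG : MedianGraph G) {u v : V} (huv : u ≠ v) :
    ∃ W ∈ halfspaces G, u ∈ W ∧ v ∉ W := by
  obtain ⟨w, huw, hdist⟩ := exists_adj_dist_eq_dist_add_one hG.1 huv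
  refine ⟨halfspace ⟨(u, w), huw⟩, ⟨_, rfl⟩, fst_mem_halfspace _, ?_⟩
  simp only [halfspace, Set.mem_ofPred_eq, G.dist_comm (u := v), hdist]
  omega

theorem eq_of_forall_mem_halfspaces_iff (hG : MedianGraph G) {u v : V}
    (h : ∀ W ∈ halfspaces G, u ∈ W ↔ v ∈ W) : u = v := by
  by_contra huv
  obtain ⟨W, hW, hu, hv⟩ := hG.exists_mem_halfspaces_separating huv
  exact hv ((h W hW).1 hu)

theorem halfspace_subset_of_squareOpposite (hG : MedianGraph G) {e f : G.Dart}
    (h : SquareOpposite e f) : halfspace e ⊆ halfspace f := by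
  obtain ⟨hfst, hsnd, hne, hne'⟩ := h
  intro z hz
  by_contra hz'
  simp only [halfspace, Set.mem_ofPred_eq] at hz hz'
  have pf := hG.dist_eq_add_one_or_of_adj f.adj z
  have pfst := hG.dist_eq_add_one_or_of_adj hfst z
  have psnd := hG.dist_eq_add_one_or_of_adj hsnd z
  -- The quadrangle condition at `e.snd` would complete the square to a `K_{2,3}`.
  obtain ⟨m, hem, hfm, hm⟩ := hG.exists_common_adj_of_dist_eq (z := z) e.adj.symm hsnd hne
    (by omega) (by omega)
  have hm_snd : m ≠ e.snd := by rintro rfl; omega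
  have hm_fst : m ≠ f.fst := by rintro rfl; omega
  exact hne (hG.eq_of_adj_of_pairwise_ne e.adj hfst hem hsnd.symm f.adj.symm hfm
    hne' hm_fst.symm hm_snd.symm)

theorem halfspace_eq_of_squareOpposite (hG : MedianGraph G) {e f : G.Dart}
    (h : SquareOpposite e f) : halfspace e = halfspace f :=
  (hG.halfspace_subset_of_squareOpposite h).antisymm (hG.halfspace_subset_of_squareOpposite h.symm)

theorem exists_squareOpposite_of_crossing (hG : MedianGraph G) {e f : G.Dart}
    (hfst : f.fst ∈ halfspace e) (hsnd : f.snd ∉ halfspace e) (hne : e.fst ≠ f.fst) :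
    ∃ e' : G.Dart, SquareOpposite e e' ∧ f.fst ∈ halfspace e' ∧ f.snd ∉ halfspace e' ∧
      G.dist e'.fst f.fst < G.dist e.fst f.fst := by
  obtain ⟨a, haa', ha'⟩ := exists_adj_dist_eq_dist_add_one hG.1 hne
  simp only [halfspace, Set.mem_ofPred_eq] at hfst hsnd
  rw [G.dist_comm (v := f.fst), G.dist_comm (v := f.fst)] at ha'
  have pe' := hG.dist_eq_add_one_or_of_adj e.adj f.snd
  have pfst := hG.dist_eq_add_one_or_of_adj f.adj e.fst
  have psnd := hG.dist_eq_add_one_or_of_adj f.adj e.snd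
  have pa := hG.dist_eq_add_one_or_of_adj f.adj a
  have paa := hG.dist_eq_add_one_or_of_adj haa' f.snd
  rw [G.dist_comm (v := f.fst), G.dist_comm (v := f.snd)] at pfst psnd pa
  have hane : e.snd ≠ a := by rintro rfl; omega
  obtain ⟨m, hbm, ham, hm⟩ := hG.exists_common_adj_of_dist_eq (z := f.snd) e.adj haa' hane
    (by omega) (by omega)
  have hem : e.fst ≠ m := by rintro rfl; omega
  refine ⟨⟨(a, m), ham⟩, ⟨haa', hbm, hem, hane⟩, ?_, ?_, ?_⟩
  · have pm := hG.dist_eq_add_one_or_of_adj hbm f.fst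
    simp only [halfspace, Set.mem_ofPred_eq]
    omega
  · simp only [halfspace, Set.mem_ofPred_eq]
    omega
  · change G.dist a f.fst < G.dist e.fst f.fst
    rw [G.dist_comm (u := a), G.dist_comm (u := e.fst)]
    omega

theorem reflTransGen_squareOpposite (hG : MedianGraph G) {e f : G.Dart}
    (hfst : f.fst ∈ halfspace e) (hsnd : f.snd ∉ halfspace e) :
    Relation.ReflTransGen SquareOpposite e f := by
  induction hn : G.dist e.fst f.fst using Nat.strong_induction_on generalizing e with
  | _ n ih =>
    by_cases hne : e.fst = f.fst
    · have hpar := hG.dist_eq_add_one_or_of_adj e.adj f.snd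
      have hadj : G.dist f.snd e.fst = 1 := by
        rw [hne]
        exact SimpleGraph.dist_eq_one_iff_adj.2 f.adj.symm
      have hsnd_eq : f.snd = e.snd := hG.1.dist_eq_zero_iff.1 <| by
        simp only [halfspace, Set.mem_ofPred_eq] at hsnd
        omega
      rw [SimpleGraph.Dart.ext e f (Prod.ext hne hsnd_eq.symm)]
    · obtain ⟨e', hee', hfst', hsnd', hlt⟩ := hG.exists_squareOpposite_of_crossing hfst hsnd hne
      exact (ih _ (hn ▸ hlt) hfst' hsnd' rfl).head hee'

theorem eq_halfspace_of_crossing (hG : MedianGraph G) {W : Set V} (hW : W ∈ halfspaces G)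
    {f : G.Dart} (hfst : f.fst ∈ W) (hsnd : f.snd ∉ W) : W = halfspace f := by
  obtain ⟨e, rfl⟩ := hW
  have hef := hG.reflTransGen_squareOpposite hfst hsnd
  clear hfst hsnd
  induction hef with
  | refl => rfl
  | tail _ h ih => exact ih.trans (hG.halfspace_eq_of_squareOpposite h)

end MedianGraph

end Halfspaces

section Convexity

variable {V : Type*} {G : SimpleGraph V}

variable (G) in
/-- Geodesic convexity of a set of vertices: every vertex on a geodesic between two members is a
member. -/
def GeodesicallyConvex (C : Set V) : Prop :=
  ∀ u ∈ C, ∀ v ∈ C, ∀ m, G.dist u m + G.dist m v = G.dist u v → m ∈ C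

namespace MedianGraph

theorem geodesicallyConvex_of_mem_halfspaces (hG : MedianGraph G) {W : Set V}
    (hW : W ∈ halfspaces G) : GeodesicallyConvex G W := by
  intro u hu v hv m hm
  induction hn : G.dist u m generalizing u with
  | zero => rwa [← hG.1.dist_eq_zero_iff.1 hn]
  | succ n ih =>
    have hum : u ≠ m := by
      rintro rfl
      simp at hn
    obtain ⟨w, huw, hw⟩ := exists_adj_dist_eq_dist_add_one hG.1 hum
    have htri := hG.1.dist_triangle (u := w) (v := m) (w := v)
    have hpar := hG.dist_eq_add_one_or_of_adj huw v
    rw [G.dist_comm (u := v) (v := w), G.dist_comm (u := v) (v := u)] at hpar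
    refine ih w ?_ (by omega) (by omega)
    by_contra hwW
    obtain rfl := hG.eq_halfspace_of_crossing hW (f := ⟨(u, w), huw⟩) hu hwW
    simp only [halfspace, Set.mem_ofPred_eq, G.dist_comm (u := v)] at hv
    omega

theorem exists_gate (hG : MedianGraph G) {C : Set V} (hC : GeodesicallyConvex G C)
    (hne : C.Nonempty) (v : V) :
    ∃ p ∈ C, ∀ q ∈ C, G.dist v q = G.dist v p + G.dist p q := by
  obtain ⟨p, hp, hmin⟩ := (measure (G.dist v)).wf.has_min C hne
  refine ⟨p, hp, fun q hq => ?_⟩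
  obtain ⟨m, ⟨hvp, hpq, hvq⟩, -⟩ := hG.2 v p q
  have hle : G.dist v p ≤ G.dist v m := not_lt.1 (hmin m (hC p hp q hq m hpq.symm))
  have hmp : m = p := hG.1.dist_eq_zero_iff.1 (by omega)
  rwa [hmp] at hvq

end MedianGraph

end Convexity

section Separation

variable {V : Type*} {G : SimpleGraph V}

variable (G) in
/-- The halfspaces containing `u` but not `v`. -/
def separatingHalfspaces (u v : V) : Set (Set V) := {W ∈ halfspaces G | u ∈ W ∧ v ∉ W}

namespace MedianGraph

theorem encard_separatingHalfspaces_le (hG : MedianGraph G) (u v : V) :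
    (separatingHalfspaces G u v).encard ≤ G.dist u v := by
  classical
  obtain ⟨p, hp⟩ := hG.1.exists_walk_length_eq_dist u v
  have hsub : separatingHalfspaces G u v ⊆ ↑(p.darts.map halfspace).toFinset := by
    rintro W ⟨hW, hu, hv⟩
    obtain ⟨e, he, hfst, hsnd⟩ := p.exists_boundary_dart W hu hv
    rw [hG.eq_halfspace_of_crossing hW hfst hsnd]
    simpa using ⟨e, he, rfl⟩
  calc (separatingHalfspaces G u v).encard
      ≤ (p.darts.map halfspace).toFinset.card := by
        simpa only [Set.encard_coe_eq_coe_finsetCard] using Set.encard_le_encard hsub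
    _ ≤ (p.darts.map halfspace).length := by exact_mod_cast List.toFinset_card_le _
    _ = G.dist u v := by rw [List.length_map, SimpleGraph.Walk.length_darts, hp]

theorem finite_separatingHalfspaces (hG : MedianGraph G) (u v : V) :
    (separatingHalfspaces G u v).Finite :=
  Set.finite_of_encard_le_coe (hG.encard_separatingHalfspaces_le u v)

end MedianGraph

end Separation

section Ultrafilter

variable {α : Type*}

/-- An ultrafilter on a complement-closed family `𝓗` of sets, in the sense of pocsets (Roller,
Sageev): a choice of one side of each complementary pair that is upward closed in `𝓗`. -/
structure IsPocsetUltrafilter (𝓗 p : Set (Set α)) : Prop where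
  subset : p ⊆ 𝓗
  compl_mem_iff : ∀ W ∈ 𝓗, Wᶜ ∈ p ↔ W ∉ p
  mem_of_subset : ∀ W ∈ p, ∀ W' ∈ 𝓗, W ⊆ W' → W' ∈ p

variable {V : Type*} {G : SimpleGraph V}

namespace MedianGraph

/-- Any halfspace containing the gate of `v` in `W` but not `v` contains `W`. -/
theorem exists_ssubset_of_isPocsetUltrafilter (hG : MedianGraph G) {p : Set (Set V)}
    (hp : IsPocsetUltrafilter (halfspaces G) p) {W : Set V} (hW : W ∈ p) {v : V} (hv : v ∉ W) :
    ∃ u, {U ∈ p | u ∉ U} ⊂ {U ∈ p | v ∉ U} := by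
  have hW' := hp.subset hW
  obtain ⟨u, hu, hgate⟩ := hG.exists_gate (hG.geodesicallyConvex_of_mem_halfspaces hW')
    (nonempty_of_mem_halfspaces hW') v
  refine ⟨u, fun U hU => ⟨hU.1, fun hvU => ?_⟩, fun h => (h ⟨hW, hv⟩).2 hu⟩
  have hU𝓗 := hp.subset hU.1
  have hUconv := hG.geodesicallyConvex_of_mem_halfspaces hU𝓗
  have hsub : W ⊆ Uᶜ := fun q hq hqU => hU.2 (hUconv v hvU q hqU u (hgate q hq).symm)
  exact (hp.compl_mem_iff U hU𝓗).1
    (hp.mem_of_subset W hW Uᶜ (hG.compl_mem_halfspaces hU𝓗) hsub) hU.1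

theorem exists_principal_of_finite (hG : MedianGraph G) {p : Set (Set V)}
    (hp : IsPocsetUltrafilter (halfspaces G) p) {x : V} (hfin : {W ∈ p | x ∉ W}.Finite) :
    ∃ v, ∀ W ∈ halfspaces G, W ∈ p ↔ v ∈ W := by
  have hexists : ∃ v, ∀ W ∈ p, v ∈ W := by
    induction hn : {W ∈ p | x ∉ W}.ncard using Nat.strong_induction_on generalizing x with
    | _ n ih =>
      by_cases hx : ∀ W ∈ p, x ∈ W
      · exact ⟨x, hx⟩
      · push Not at hx
        obtain ⟨W, hW, hxW⟩ := hx
        obtain ⟨u, hu⟩ := hG.exists_ssubset_of_isPocsetUltrafilter hp hW hxW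
        exact ih _ (hn ▸ Set.ncard_lt_ncard hu hfin) (hfin.subset hu.subset) rfl
  obtain ⟨v, hv⟩ := hexists
  refine ⟨v, fun W hW => ⟨hv W, fun hvW => ?_⟩⟩
  by_contra hWp
  exact hv Wᶜ ((hp.compl_mem_iff W hW).2 hWp) hvW

end MedianGraph

end Ultrafilter

section Fractional

variable {α : Type*}

/-- A real-valued relaxation of `IsPocsetUltrafilter`, whose `{0, 1}`-valued instances correspond to
the pocset ultrafilters on `𝓗`. The values need not lie in `[0, 1]`, and those outside `𝓗` are
irrelevant. -/
structure IsFractionalUltrafilter (𝓗 : Set (Set α)) (c : Set α → ℝ) : Prop where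
  add_compl : ∀ W ∈ 𝓗, c W + c Wᶜ = 1
  mono : ∀ W ∈ 𝓗, ∀ W' ∈ 𝓗, W ⊆ W' → c W ≤ c W'

theorem convex_setOf_isFractionalUltrafilter (𝓗 : Set (Set α)) :
    Convex ℝ {c | IsFractionalUltrafilter 𝓗 c} := by
  intro c hc d hd s t hs ht hst
  refine ⟨fun W hW => ?_, fun W hW W' hW' hsub => ?_⟩
  · simp only [Pi.add_apply, Pi.smul_apply, smul_eq_mul]
    linear_combination s * hc.add_compl W hW + t * hd.add_compl W hW + hst
  · have hcW := hc.mono W hW W' hW' hsub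
    have hdW := hd.mono W hW W' hW' hsub
    simp only [Pi.add_apply, Pi.smul_apply, smul_eq_mul]
    gcongr

theorem isClosed_setOf_isFractionalUltrafilter (𝓗 : Set (Set α)) :
    IsClosed {c | IsFractionalUltrafilter 𝓗 c} := by
  have heq : {c | IsFractionalUltrafilter 𝓗 c} =
      {c : Set α → ℝ | ∀ W ∈ 𝓗, c W + c Wᶜ = 1} ∩
        {c | ∀ W ∈ 𝓗, ∀ W' ∈ 𝓗, W ⊆ W' → c W ≤ c W'} :=
    Set.ext fun c => ⟨fun h => ⟨h.1, h.2⟩, fun h => ⟨h.1, h.2⟩⟩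
  rw [heq]
  refine .inter ?_ ?_
  · simp only [Set.ofPred_forall]
    exact isClosed_iInter fun W => isClosed_iInter fun _ =>
      isClosed_eq (by fun_prop) continuous_const
  · simp only [Set.ofPred_forall]
    exact isClosed_iInter fun W => isClosed_iInter fun _ => isClosed_iInter fun W' =>
      isClosed_iInter fun _ => isClosed_iInter fun _ => isClosed_le (by fun_prop) (by fun_prop)

/-- The members of `𝓗` on which a fractional ultrafilter does not decide. -/
def tied (𝓗 : Set (Set α)) (c : Set α → ℝ) : Set (Set α) := {W ∈ 𝓗 | c W = 1 / 2}

/-- The rank used to break ties compatibly with inclusion. -/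
noncomputable def tiedRank (𝓗 : Set (Set α)) (c : Set α → ℝ) (W : Set α) : ℕ :=
  {U ∈ tied 𝓗 c | U ⊆ W}.ncard

/-- The majority choice of a fractional ultrafilter: the heavier side of each complementary pair;
when both sides weigh `1 / 2`, the one of larger rank, and when the ranks agree too, the one
in `σ`. -/
def majority (𝓗 : Set (Set α)) (c : Set α → ℝ) (σ : Set (Set α)) : Set (Set α) :=
  {W ∈ 𝓗 | 1 / 2 < c W ∨ c W = 1 / 2 ∧ (tiedRank 𝓗 c Wᶜ < tiedRank 𝓗 c W ∨
    tiedRank 𝓗 c Wᶜ = tiedRank 𝓗 c W ∧ W ∈ σ)}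

variable {𝓗 : Set (Set α)} {c : Set α → ℝ} {σ : Set (Set α)}

theorem tiedRank_lt_tiedRank (hfin : (tied 𝓗 c).Finite) {W W' : Set α} (hW' : W' ∈ tied 𝓗 c)
    (hsub : W ⊂ W') : tiedRank 𝓗 c W < tiedRank 𝓗 c W' := by
  refine Set.ncard_lt_ncard ⟨fun U hU => ⟨hU.1, hU.2.trans hsub.subset⟩, fun h => ?_⟩
    (hfin.subset fun U hU => hU.1)
  exact hsub.not_subset (h ⟨hW', subset_rfl⟩).2

theorem IsFractionalUltrafilter.compl_mem_tied (hc : IsFractionalUltrafilter 𝓗 c)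
    (h𝓗 : ∀ W ∈ 𝓗, Wᶜ ∈ 𝓗) {W : Set α} (hW : W ∈ tied 𝓗 c) : Wᶜ ∈ tied 𝓗 c :=
  ⟨h𝓗 W hW.1, by linarith [hc.add_compl W hW.1, hW.2]⟩

theorem IsFractionalUltrafilter.mem_majority_of_subset (hc : IsFractionalUltrafilter 𝓗 c)
    (h𝓗 : ∀ W ∈ 𝓗, Wᶜ ∈ 𝓗) (hfin : (tied 𝓗 c).Finite) {W W' : Set α}
    (hW : W ∈ majority 𝓗 c σ) (hW' : W' ∈ 𝓗) (hsub : W ⊆ W') : W' ∈ majority 𝓗 c σ := by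
  obtain rfl | hssub := hsub.eq_or_ssubset
  · exact hW
  have hle := hc.mono W hW.1 W' hW' hsub
  obtain ⟨hW𝓗, hlt | ⟨heq, hrank⟩⟩ := hW
  · exact ⟨hW', .inl (hlt.trans_le hle)⟩
  · obtain hlt | heq' := (heq ▸ hle).lt_or_eq
    · exact ⟨hW', .inl hlt⟩
    · have hlt := tiedRank_lt_tiedRank hfin ⟨hW', heq'.symm⟩ hssub
      have hlt_compl := tiedRank_lt_tiedRank hfin (hc.compl_mem_tied h𝓗 ⟨hW𝓗, heq⟩)
        (compl_lt_compl_iff_lt.2 hssub)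
      exact ⟨hW', .inr ⟨heq'.symm, .inl (by omega)⟩⟩

theorem IsFractionalUltrafilter.isPocsetUltrafilter_majority (hc : IsFractionalUltrafilter 𝓗 c)
    (h𝓗 : ∀ W ∈ 𝓗, Wᶜ ∈ 𝓗) (hfin : (tied 𝓗 c).Finite)
    (hσ : ∀ W ∈ 𝓗, Wᶜ ∈ σ ↔ W ∉ σ) : IsPocsetUltrafilter 𝓗 (majority 𝓗 c σ) where
  subset _ hW := hW.1
  mem_of_subset _ hW _ hW' hsub := hc.mem_majority_of_subset h𝓗 hfin hW hW' hsub
  compl_mem_iff W hW := by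
    have hadd : c Wᶜ = 1 - c W := by linarith [hc.add_compl W hW]
    simp only [majority, Set.mem_ofPred_eq, h𝓗 W hW, hW, true_and, compl_compl, hσ W hW, hadd]
    obtain hlt | heq | hgt := lt_trichotomy (c W) (1 / 2)
    · exact iff_of_true (.inl (by linarith)) (by rintro (h | h) <;> linarith)
    · grind
    · exact iff_of_false (by rintro (h | h) <;> linarith) (not_not_intro (.inl hgt))

variable {Γ : Type*} [Group Γ] [MulAction Γ α] {g : Γ}

theorem tiedRank_smul (h𝓗 : ∀ W : Set α, g • W ∈ 𝓗 ↔ W ∈ 𝓗)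
    (hc : ∀ W : Set α, c (g • W) = c W) (W : Set α) :
    tiedRank 𝓗 c (g • W) = tiedRank 𝓗 c W := by
  rw [tiedRank, tiedRank, ← Set.ncard_smul_set g {U ∈ tied 𝓗 c | U ⊆ W}]
  congr 1
  ext U
  rw [Set.mem_smul_set_iff_inv_smul_mem]
  have h𝓗U := h𝓗 (g⁻¹ • U)
  have hcU := hc (g⁻¹ • U)
  rw [smul_inv_smul] at h𝓗U hcU
  have hsub : g⁻¹ • U ⊆ W ↔ U ⊆ g • W := by
    rw [Set.smul_set_subset_iff_subset_inv_smul_set, inv_inv]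
  simp only [tied, Set.mem_ofPred_eq, h𝓗U, hcU, hsub]

theorem smul_mem_majority_iff (h𝓗 : ∀ W : Set α, g • W ∈ 𝓗 ↔ W ∈ 𝓗)
    (hc : ∀ W : Set α, c (g • W) = c W) (hσ : ∀ W : Set α, g • W ∈ σ ↔ W ∈ σ) (W : Set α) :
    g • W ∈ majority 𝓗 c σ ↔ W ∈ majority 𝓗 c σ := by
  simp only [majority, Set.mem_ofPred_eq, h𝓗, hc, hσ, ← Set.smul_set_compl, tiedRank_smul h𝓗 hc]

end Fractional

section Hilbert

variable {X : Type*} [PseudoMetricSpace X] {K B : Set X}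

/-- The points of `K` whose squared distance to every point of `B` is at most `s`. -/
def coveringCenters (K B : Set X) (s : ℝ) : Set X := {c ∈ K | ∀ b ∈ B, dist c b ^ 2 ≤ s}

theorem isClosed_coveringCenters (hK : IsClosed K) (B : Set X) (s : ℝ) :
    IsClosed (coveringCenters K B s) := by
  have heq : coveringCenters K B s = K ∩ {c | ∀ b ∈ B, dist c b ^ 2 ≤ s} := rfl
  rw [heq]
  simp only [Set.ofPred_forall]
  exact hK.inter <| isClosed_iInter fun b => isClosed_iInter fun _ =>
    isClosed_le (by fun_prop) continuous_const

theorem coveringCenters_mono {s t : ℝ} (hst : s ≤ t) :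
    coveringCenters K B s ⊆ coveringCenters K B t :=
  fun _ hc => ⟨hc.1, fun b hb => (hc.2 b hb).trans hst⟩

theorem exists_coveringCenters_nonempty (hKne : K.Nonempty) (hB : Bornology.IsBounded B) :
    ∃ s, (coveringCenters K B s).Nonempty := by
  obtain ⟨c, hc⟩ := hKne
  obtain ⟨r, hr⟩ := hB.subset_closedBall c
  refine ⟨r ^ 2, c, hc, fun b hb => ?_⟩
  have hcb : dist c b ≤ r := Metric.mem_closedBall'.1 (hr hb)
  gcongr

variable {E : Type*} [NormedAddCommGroup E] [InnerProductSpace ℝ E] {K B : Set E}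

theorem midpoint_mem_coveringCenters (hK : Convex ℝ K) {s : ℝ} {c d : E}
    (hc : c ∈ coveringCenters K B s) (hd : d ∈ coveringCenters K B s) :
    midpoint ℝ c d ∈ coveringCenters K B (s - (dist c d / 2) ^ 2) := by
  refine ⟨hK.midpoint_mem hc.1 hd.1, fun b hb => ?_⟩
  have hapollonius :=
    EuclideanGeometry.dist_sq_add_dist_sq_eq_two_mul_dist_midpoint_sq_add_half_dist_sq b c d
  have hcb := hc.2 b hb
  have hdb := hd.2 b hb
  rw [dist_comm] at hcb hdb ⊢
  linarith

theorem dist_sq_le_of_mem_coveringCenters (hK : Convex ℝ K) {r : ℝ}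
    (hr : r ∈ lowerBounds {s | (coveringCenters K B s).Nonempty}) {s : ℝ} {c d : E}
    (hc : c ∈ coveringCenters K B s) (hd : d ∈ coveringCenters K B s) :
    dist c d ^ 2 ≤ 4 * (s - r) := by
  have hle : r ≤ s - (dist c d / 2) ^ 2 := hr ⟨_, midpoint_mem_coveringCenters hK hc hd⟩
  linarith

theorem exists_coveringCenters_eq_singleton [CompleteSpace E] (hKcl : IsClosed K)
    (hK : Convex ℝ K) (hKne : K.Nonempty) (hBne : B.Nonempty) (hB : Bornology.IsBounded B) :
    ∃ s c, coveringCenters K B s = {c} := by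
  set S : Set ℝ := {s | (coveringCenters K B s).Nonempty}
  have hSne : S.Nonempty := exists_coveringCenters_nonempty hKne hB
  have hSbdd : BddBelow S := by
    obtain ⟨b, hb⟩ := hBne
    exact ⟨0, fun s ⟨c, hc⟩ => (sq_nonneg _).trans (hc.2 b hb)⟩
  have hdist {s : ℝ} {c d : E} (hc : c ∈ coveringCenters K B s)
      (hd : d ∈ coveringCenters K B s) : dist c d ^ 2 ≤ 4 * (s - sInf S) :=
    dist_sq_le_of_mem_coveringCenters hK (fun _ hs => csInf_le hSbdd hs) hc hd
  obtain ⟨u, hu_anti, hu_pos, hu_lim⟩ := exists_seq_strictAnti_tendsto (0 : ℝ)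
  have hdist_u (n : ℕ) : ∀ c ∈ coveringCenters K B (sInf S + u n),
      ∀ d ∈ coveringCenters K B (sInf S + u n), dist c d ≤ √(4 * u n) := fun c hc d hd =>
    Real.le_sqrt_of_sq_le (by linarith [hdist hc hd])
  obtain ⟨c, hc⟩ : (⋂ n, coveringCenters K B (sInf S + u n)).Nonempty := by
    refine Metric.nonempty_iInter_of_nonempty_biInter
      (fun n => isClosed_coveringCenters hKcl B _)
      (fun n => Metric.isBounded_iff.2 ⟨_, fun c hc d hd => hdist_u n c hc d hd⟩)
      (fun n => ?_) ?_
    · obtain ⟨s, ⟨c, hc⟩, hs⟩ := Real.lt_sInf_add_pos hSne (hu_pos n)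
      refine ⟨c, Set.mem_iInter₂.2 fun m hm => coveringCenters_mono ?_ hc⟩
      linarith [hu_anti.antitone hm]
    · refine squeeze_zero (fun _ => Metric.diam_nonneg)
        (fun n => Metric.diam_le_of_forall_dist_le (Real.sqrt_nonneg _) (hdist_u n)) ?_
      simpa using (hu_lim.const_mul 4).sqrt
  have hc' : c ∈ coveringCenters K B (sInf S) := by
    rw [Set.mem_iInter] at hc
    refine ⟨(hc 0).1, fun b hb => ?_⟩
    exact ge_of_tendsto' (by simpa using hu_lim.const_add (sInf S)) fun n => (hc n).2 b hb
  refine ⟨sInf S, c, Set.eq_singleton_iff_unique_mem.2 ⟨hc', fun d hd => ?_⟩⟩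
  exact dist_le_zero.1 (by nlinarith [hdist hd hc'])

/-- The fixed point is the Chebyshev centre of `B` relative to `K`. -/
theorem exists_mem_forall_isometry_apply_eq [CompleteSpace E] (hKcl : IsClosed K)
    (hK : Convex ℝ K) (hKne : K.Nonempty) (hBne : B.Nonempty) (hB : Bornology.IsBounded B) :
    ∃ c ∈ K, ∀ f : E → E, Isometry f → Set.MapsTo f K K → B ⊆ f '' B → f c = c := by
  obtain ⟨s, c, hc⟩ := exists_coveringCenters_eq_singleton hKcl hK hKne hBne hB
  have hcmem : c ∈ coveringCenters K B s := hc ▸ Set.mem_singleton c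
  refine ⟨c, hcmem.1, fun f hf hfK hfB => ?_⟩
  have hfc : f c ∈ coveringCenters K B s := by
    refine ⟨hfK hcmem.1, fun b hb => ?_⟩
    obtain ⟨b', hb', rfl⟩ := hfB hb
    rw [hf.dist_eq]
    exact hcmem.2 b' hb'
  rwa [hc] at hfc

end Hilbert

section SquareSummable

variable {Ω : Type*}

theorem memℓp_two_iff {f : Ω → ℝ} : Memℓp f 2 ↔ Summable fun w => f w ^ 2 := by
  simp [memℓp_gen_iff (p := 2) (by norm_num)]

theorem norm_sq_eq_tsum_sq (y : lp (fun _ : Ω => ℝ) 2) : ‖y‖ ^ 2 = ∑' w, y w ^ 2 := by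
  simpa using lp.norm_rpow_eq_tsum (p := 2) (by norm_num) y

theorem finite_setOf_one_fourth_le_sq_sub {c a : Ω → ℝ}
    (h : Summable fun w => (c w - a w) ^ 2) : {w | 1 / 4 ≤ (c w - a w) ^ 2}.Finite := by
  have hlt := h.tendsto_cofinite_zero.eventually_lt_const (show (0 : ℝ) < 1 / 4 by norm_num)
  simpa only [Filter.eventually_cofinite, not_lt] using hlt

variable {Γ : Type*} [Group Γ] [MulAction Γ Ω]

theorem comp_smul_mem_closedConvexHull {a c : Ω → ℝ}
    (hc : c ∈ closedConvexHull ℝ (Set.range fun (g : Γ) w => a (g⁻¹ • w))) (g : Γ) :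
    (fun w => c (g⁻¹ • w)) ∈ closedConvexHull ℝ (Set.range fun (g : Γ) w => a (g⁻¹ • w)) := by
  let L : (Ω → ℝ) →L[ℝ] (Ω → ℝ) := .pi fun w => .proj (g⁻¹ • w)
  refine closedConvexHull_min (t := L ⁻¹' _) ?_
    (convex_closedConvexHull.linear_preimage L.toLinearMap)
    (isClosed_closedConvexHull.preimage L.continuous) hc
  rintro _ ⟨h, rfl⟩
  refine subset_closedConvexHull ⟨g * h, ?_⟩
  ext w
  simp [L, mul_smul]

/-- Translation by `g` on `ℓ²(Ω)`. -/
noncomputable def lpTranslate (g : Γ) : lp (fun _ : Ω => ℝ) 2 →ₗᵢ[ℝ] lp (fun _ : Ω => ℝ) 2 where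
  toFun y := ⟨fun w => y (g⁻¹ • w), memℓp_two_iff.2 <|
    (MulAction.toPerm g⁻¹ : Equiv.Perm Ω).summable_iff.2 (memℓp_two_iff.1 y.2)⟩
  map_add' _ _ := rfl
  map_smul' _ _ := rfl
  norm_map' y := by
    rw [← sq_eq_sq₀ (norm_nonneg _) (norm_nonneg _), norm_sq_eq_tsum_sq, norm_sq_eq_tsum_sq]
    exact (MulAction.toPerm g⁻¹ : Equiv.Perm Ω).tsum_eq fun w => y w ^ 2

theorem lpTranslate_apply (g : Γ) (y : lp (fun _ : Ω => ℝ) 2) (w : Ω) :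
    lpTranslate g y w = y (g⁻¹ • w) := rfl

theorem isClosed_lp_preimage_add {H : Set (Ω → ℝ)} (hH : IsClosed H) (a : Ω → ℝ) :
    IsClosed {y : lp (fun _ : Ω => ℝ) 2 | (fun w => y w + a w) ∈ H} :=
  hH.preimage <| continuous_pi fun w =>
    (lp.evalCLM ℝ (fun _ : Ω => ℝ) 2 w).continuous.add continuous_const

theorem convex_lp_preimage_add {H : Set (Ω → ℝ)} (hH : Convex ℝ H) (a : Ω → ℝ) :
    Convex ℝ {y : lp (fun _ : Ω => ℝ) 2 | (fun w => y w + a w) ∈ H} :=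
  (hH.translate_preimage_left a).is_linear_preimage ⟨fun _ _ => rfl, fun _ _ => rfl⟩

/-- `Γ` acts on the affine space `a + ℓ²(Ω)` by isometries, and the orbit of `a` is bounded, so `c`
can be taken to be a Chebyshev centre of that orbit. -/
theorem exists_invariant_mem_closedConvexHull {a : Ω → ℝ} {C : ℝ}
    (hsum : ∀ g : Γ, Summable fun w => (a (g⁻¹ • w) - a w) ^ 2)
    (hC : ∀ g : Γ, ∑' w, (a (g⁻¹ • w) - a w) ^ 2 ≤ C) :
    ∃ c ∈ closedConvexHull ℝ (Set.range fun (g : Γ) w => a (g⁻¹ • w)),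
      (∀ (g : Γ) w, c (g⁻¹ • w) = c w) ∧ Summable fun w => (c w - a w) ^ 2 := by
  let b (g : Γ) : lp (fun _ : Ω => ℝ) 2 := ⟨fun w => a (g⁻¹ • w) - a w, memℓp_two_iff.2 (hsum g)⟩
  let H := closedConvexHull ℝ (Set.range fun (g : Γ) w => a (g⁻¹ • w))
  let K : Set (lp (fun _ : Ω => ℝ) 2) := {y | (fun w => y w + a w) ∈ H}
  have hKne : K.Nonempty := ⟨0, subset_closedConvexHull ⟨1, by ext w; simp⟩⟩
  have hBdd : Bornology.IsBounded (Set.range b) := by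
    refine isBounded_iff_forall_norm_le.2 ⟨√C, ?_⟩
    rintro _ ⟨g, rfl⟩
    exact Real.le_sqrt_of_sq_le ((norm_sq_eq_tsum_sq _).trans_le (hC g))
  obtain ⟨y, hyK, hy⟩ := exists_mem_forall_isometry_apply_eq
    (isClosed_lp_preimage_add isClosed_closedConvexHull a)
    (convex_lp_preimage_add convex_closedConvexHull a) hKne (Set.range_nonempty b) hBdd
  refine ⟨fun w => y w + a w, hyK, fun g w => ?_, by simpa using memℓp_two_iff.1 y.2⟩
  have hisom : Isometry fun z => lpTranslate g z + b g :=
    (isometry_add_right (b g)).comp (lpTranslate g).isometry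
  have hmaps : Set.MapsTo (fun z => lpTranslate g z + b g) K K := fun z hz => by
    have heq : (fun w => (lpTranslate g z + b g : lp (fun _ : Ω => ℝ) 2) w + a w) =
        fun w => z (g⁻¹ • w) + a (g⁻¹ • w) := by
      ext w
      rw [lp.coeFn_add, Pi.add_apply, lpTranslate_apply, add_assoc, sub_add_cancel]
    change _ ∈ H
    rw [heq]
    exact comp_smul_mem_closedConvexHull hz g
  have horbit (h : Γ) : lpTranslate g (b (g⁻¹ * h)) + b g = b h := by
    ext w
    rw [lp.coeFn_add, Pi.add_apply, lpTranslate_apply]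
    simp only [b, mul_inv_rev, inv_inv, mul_smul, smul_inv_smul, sub_add_sub_cancel]
  have hfix : lpTranslate g y + b g = y :=
    hy _ hisom hmaps (Set.range_subset_iff.2 fun h => ⟨_, ⟨g⁻¹ * h, rfl⟩, horbit h⟩)
  have hfix_w : y (g⁻¹ • w) + (a (g⁻¹ • w) - a w) = y w := congrArg (fun z => z w) hfix
  linarith

end SquareSummable

section Orientation

variable {V : Type*} {G : SimpleGraph V}

variable (G) in
/-- The halfspaces on the origin side of an edge that the orientation `o` declares positive. -/
def positiveHalfspaces (o : V → V → Bool) : Set (Set V) :=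
  halfspace '' {e : G.Dart | o e.fst e.snd = true}

namespace CubicalOrientation

variable {o : V → V → Bool}

theorem eq_of_squareOpposite (ho : CubicalOrientation G o) {e f : G.Dart}
    (h : SquareOpposite e f) : o e.fst e.snd = o f.fst f.snd :=
  ho.2 e.fst e.snd f.fst f.snd e.adj.ne h.1.ne h.2.2.1 h.2.2.2 h.2.1.ne f.adj.ne
    e.adj f.adj h.1 h.2.1

theorem eq_of_halfspace_eq (ho : CubicalOrientation G o) (hG : MedianGraph G) {e f : G.Dart}
    (h : halfspace e = halfspace f) : o e.fst e.snd = o f.fst f.snd := by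
  have hef := hG.reflTransGen_squareOpposite (h ▸ fst_mem_halfspace f)
    (h ▸ snd_notMem_halfspace f)
  clear h
  induction hef with
  | refl => rfl
  | tail _ h ih => exact ih.trans (ho.eq_of_squareOpposite h)

theorem halfspace_mem_positiveHalfspaces_iff (ho : CubicalOrientation G o) (hG : MedianGraph G)
    (e : G.Dart) : halfspace e ∈ positiveHalfspaces G o ↔ o e.fst e.snd = true :=
  ⟨fun ⟨_, hf, hfe⟩ => ho.eq_of_halfspace_eq hG hfe ▸ hf, fun he => ⟨e, he, rfl⟩⟩

theorem compl_mem_positiveHalfspaces_iff (ho : CubicalOrientation G o) (hG : MedianGraph G)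
    {W : Set V} (hW : W ∈ halfspaces G) :
    Wᶜ ∈ positiveHalfspaces G o ↔ W ∉ positiveHalfspaces G o := by
  obtain ⟨e, rfl⟩ := hW
  rw [hG.compl_halfspace, ho.halfspace_mem_positiveHalfspaces_iff hG,
    ho.halfspace_mem_positiveHalfspaces_iff hG]
  have hne := ho.1 e.fst e.snd e.adj
  change o e.snd e.fst = true ↔ ¬ o e.fst e.snd = true
  grind

end CubicalOrientation

end Orientation

section Side

variable {V : Type*} {G : SimpleGraph V}

variable (G) in
/-- The principal ultrafilter of halfspaces at `x`, as a fractional ultrafilter. -/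
noncomputable def side (x : V) : Set V → ℝ := {W ∈ halfspaces G | x ∈ W}.indicator 1

theorem side_of_mem {W : Set V} (hW : W ∈ halfspaces G) {x : V} (hx : x ∈ W) : side G x W = 1 :=
  Set.indicator_of_mem (show W ∈ {W ∈ halfspaces G | x ∈ W} from ⟨hW, hx⟩) _

theorem side_of_notMem {W : Set V} {x : V} (hx : x ∉ W) : side G x W = 0 :=
  Set.indicator_of_notMem (fun h : W ∈ {W ∈ halfspaces G | x ∈ W} => hx h.2) _

theorem side_of_notMem_halfspaces {W : Set V} (hW : W ∉ halfspaces G) (x : V) : side G x W = 0 :=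
  Set.indicator_of_notMem (fun h : W ∈ {W ∈ halfspaces G | x ∈ W} => hW h.1) _

theorem sq_side_sub_side (x y : V) (W : Set V) :
    (side G y W - side G x W) ^ 2 =
      (separatingHalfspaces G x y ∪ separatingHalfspaces G y x).indicator 1 W := by
  classical
  by_cases hW : W ∈ halfspaces G
  · by_cases hx : x ∈ W <;> by_cases hy : y ∈ W <;>
      simp [separatingHalfspaces, side_of_mem, side_of_notMem, hW, hx, hy]
  · simp [separatingHalfspaces, side_of_notMem_halfspaces hW, hW]

namespace MedianGraph

theorem isFractionalUltrafilter_side (hG : MedianGraph G) (x : V) :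
    IsFractionalUltrafilter (halfspaces G) (side G x) where
  add_compl W hW := by
    have hWc := hG.compl_mem_halfspaces hW
    by_cases hx : x ∈ W
    · rw [side_of_mem hW hx, side_of_notMem (not_not_intro hx), add_zero]
    · rw [side_of_notMem hx, side_of_mem hWc hx, zero_add]
  mono W hW W' hW' hsub := by
    by_cases hx : x ∈ W
    · rw [side_of_mem hW hx, side_of_mem hW' (hsub hx)]
    · rw [side_of_notMem hx]
      exact Set.indicator_nonneg (fun _ _ => zero_le_one) W'

theorem hasSum_sq_side_sub_side (hG : MedianGraph G) (x y : V) :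
    HasSum (fun W => (side G y W - side G x W) ^ 2)
      (separatingHalfspaces G x y ∪ separatingHalfspaces G y x).ncard := by
  have hfin := (hG.finite_separatingHalfspaces x y).union (hG.finite_separatingHalfspaces y x)
  simp only [sq_side_sub_side]
  lift separatingHalfspaces G x y ∪ separatingHalfspaces G y x to Finset (Set V) using hfin
    with S
  rw [Set.ncard_coe_finset]
  have hcard : ∑ W ∈ S, (S : Set (Set V)).indicator (1 : Set V → ℝ) W = S.card := by
    simp [Finset.sum_indicator_subset]
  exact hcard ▸ hasSum_sum_of_ne_finset_zero (by simp)

theorem tsum_sq_side_sub_side_le (hG : MedianGraph G) (x y : V) :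
    ∑' W, (side G y W - side G x W) ^ 2 ≤ 2 * G.dist x y := by
  have hencard : (separatingHalfspaces G x y ∪ separatingHalfspaces G y x).encard ≤
      (2 * G.dist x y : ℕ) :=
    calc _ ≤ (separatingHalfspaces G x y).encard + (separatingHalfspaces G y x).encard :=
          Set.encard_union_le _ _
      _ ≤ G.dist x y + G.dist y x :=
          add_le_add (hG.encard_separatingHalfspaces_le x y) (hG.encard_separatingHalfspaces_le y x)
      _ = (2 * G.dist x y : ℕ) := by
          rw [G.dist_comm (u := y), two_mul, Nat.cast_add]
  rw [(hG.hasSum_sq_side_sub_side x y).tsum_eq]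
  exact_mod_cast ENat.toNat_le_of_le_natCast hencard

end MedianGraph

theorem finite_tied {c : Set V → ℝ} {x : V} (h : Summable fun W => (c W - side G x W) ^ 2) :
    (tied (halfspaces G) c).Finite := by
  refine (finite_setOf_one_fourth_le_sq_sub h).subset fun W hW => ?_
  obtain ⟨hW𝓗, hcW⟩ := hW
  by_cases hx : x ∈ W
  · norm_num [side_of_mem hW𝓗 hx, hcW]
  · norm_num [side_of_notMem hx, hcW]

theorem finite_majority_notMem {c : Set V → ℝ} {x : V} (σ : Set (Set V))
    (h : Summable fun W => (c W - side G x W) ^ 2) :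
    {W ∈ majority (halfspaces G) c σ | x ∉ W}.Finite := by
  refine (finite_setOf_one_fourth_le_sq_sub h).subset fun W hW => ?_
  have hle : 1 / 2 ≤ c W := hW.1.2.elim le_of_lt fun hcW => hcW.1.ge
  rw [Set.mem_ofPred_eq, side_of_notMem hW.2]
  nlinarith

end Side

section Action

variable {V : Type*} {G : SimpleGraph V} {Γ : Type*} [Group Γ] [MulAction Γ V]
  (hG : G.Connected) (hact : ∀ (g : Γ) (u v : V), G.Adj u v ↔ G.Adj (g • u) (g • v))

/-- The action of a group element by graph automorphisms, as a graph homomorphism. -/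
def smulHom (g : Γ) : G →g G where
  toFun := (g • ·)
  map_rel' {u v} := (hact g u v).1

include hG hact

theorem dist_smul_smul (g : Γ) (u v : V) : G.dist (g • u) (g • v) = G.dist u v := by
  have hle (g : Γ) (u v : V) : G.dist (g • u) (g • v) ≤ G.dist u v := by
    obtain ⟨p, hp⟩ := hG.exists_walk_length_eq_dist u v
    rw [← hp, ← p.length_map (smulHom hact g)]
    exact SimpleGraph.dist_le _
  refine (hle g u v).antisymm ?_
  simpa only [inv_smul_smul] using hle g⁻¹ (g • u) (g • v)

theorem smul_halfspace (g : Γ) (e : G.Dart) :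
    g • halfspace e = halfspace ((smulHom hact g).mapDart e) := by
  ext z
  have hdist (w : V) : G.dist (g⁻¹ • z) w = G.dist z (g • w) := by
    rw [← dist_smul_smul hG hact g, smul_inv_smul]
  rw [Set.mem_smul_set_iff_inv_smul_mem]
  change G.dist _ _ < G.dist _ _ ↔ G.dist z (g • e.fst) < G.dist z (g • e.snd)
  rw [hdist, hdist]

theorem smul_mem_halfspaces_iff (g : Γ) (W : Set V) : g • W ∈ halfspaces G ↔ W ∈ halfspaces G := by
  have himp (g : Γ) (W : Set V) (hW : W ∈ halfspaces G) : g • W ∈ halfspaces G := by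
    obtain ⟨e, rfl⟩ := hW
    exact ⟨_, (smul_halfspace hG hact g e).symm⟩
  exact ⟨fun h => inv_smul_smul g W ▸ himp g⁻¹ _ h, himp g W⟩

theorem smul_mem_positiveHalfspaces_iff {o : V → V → Bool}
    (hpres : ∀ (g : Γ) (u v : V), G.Adj u v → o (g • u) (g • v) = o u v) (g : Γ) (W : Set V) :
    g • W ∈ positiveHalfspaces G o ↔ W ∈ positiveHalfspaces G o := by
  have himp (g : Γ) (W : Set V) (hW : W ∈ positiveHalfspaces G o) :
      g • W ∈ positiveHalfspaces G o := by
    obtain ⟨e, he, rfl⟩ := hW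
    exact ⟨_, (hpres g _ _ e.adj).trans he, (smul_halfspace hG hact g e).symm⟩
  exact ⟨fun h => inv_smul_smul g W ▸ himp g⁻¹ _ h, himp g W⟩

theorem side_inv_smul (g : Γ) (x : V) (W : Set V) : side G x (g⁻¹ • W) = side G (g • x) W := by
  classical
  simp only [side, Set.indicator_apply, Set.mem_ofPred_eq, smul_mem_halfspaces_iff hG hact,
    Set.mem_inv_smul_set_iff, Pi.one_apply]

end Action

section InvariantUltrafilter

variable {V : Type*} {G : SimpleGraph V} {Γ : Type*} [Group Γ] [MulAction Γ V]

theorem MedianGraph.exists_invariant_isFractionalUltrafilter (hG : MedianGraph G)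
    (hact : ∀ (g : Γ) (u v : V), G.Adj u v ↔ G.Adj (g • u) (g • v)) {x : V} {N : ℕ}
    (hbdd : ∀ g : Γ, G.dist x (g • x) ≤ N) :
    ∃ c, IsFractionalUltrafilter (halfspaces G) c ∧ (∀ (g : Γ) W, c (g • W) = c W) ∧
      Summable fun W => (c W - side G x W) ^ 2 := by
  have hsq_summable (g : Γ) : Summable fun W => (side G x (g⁻¹ • W) - side G x W) ^ 2 := by
    simpa only [side_inv_smul hG.1 hact] using (hG.hasSum_sq_side_sub_side x (g • x)).summable
  have htsum_le (g : Γ) : ∑' W, (side G x (g⁻¹ • W) - side G x W) ^ 2 ≤ 2 * N := by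
    have hle : (2 * G.dist x (g • x) : ℝ) ≤ 2 * N := by
      gcongr
      exact hbdd g
    simpa only [side_inv_smul hG.1 hact] using (hG.tsum_sq_side_sub_side_le x (g • x)).trans hle
  obtain ⟨c, hc, hinv, hsum⟩ := exists_invariant_mem_closedConvexHull hsq_summable htsum_le
  refine ⟨c, ?_, fun g W => by simpa only [inv_inv] using hinv g⁻¹ W, hsum⟩
  refine closedConvexHull_min (Set.range_subset_iff.2 fun g => ?_)
    (convex_setOf_isFractionalUltrafilter _) (isClosed_setOf_isFractionalUltrafilter _) hc
  rw [funext (side_inv_smul hG.1 hact g x)]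
  exact hG.isFractionalUltrafilter_side (g • x)

end InvariantUltrafilter

/-- A group acting on a cubically oriented median graph, preserving the orientation
and with a bounded orbit, fixes a vertex. -/
theorem bounded_orbit_orientation_preserving_fixes_vertex {V : Type*}
    (𝒢 : SimpleGraph V) (hG : MedianGraph 𝒢)
    (o : V → V → Bool) (ho : CubicalOrientation 𝒢 o)
    {Γ : Type*} [Group Γ] [MulAction Γ V]
    (hact : ∀ (g : Γ) (u v : V), 𝒢.Adj u v ↔ 𝒢.Adj (g • u) (g • v))
    (hpres : ∀ (g : Γ) (u v : V), 𝒢.Adj u v → o (g • u) (g • v) = o u v)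
    (x : V) (N : ℕ) (hbdd : ∀ g : Γ, 𝒢.dist x (g • x) ≤ N) :
    ∃ v : V, ∀ g : Γ, g • v = v := by
  obtain ⟨c, hc, hinv, hsum⟩ := hG.exists_invariant_isFractionalUltrafilter hact hbdd
  have hultra := hc.isPocsetUltrafilter_majority (fun _ hW => hG.compl_mem_halfspaces hW)
    (finite_tied hsum) (fun _ hW => ho.compl_mem_positiveHalfspaces_iff hG hW)
  obtain ⟨v, hv⟩ := hG.exists_principal_of_finite hultra (finite_majority_notMem _ hsum)
  refine ⟨v, fun g => hG.eq_of_forall_mem_halfspaces_iff fun W hW => ?_⟩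
  have hgW : g⁻¹ • W ∈ halfspaces 𝒢 := (smul_mem_halfspaces_iff hG.1 hact g⁻¹ W).2 hW
  calc g • v ∈ W ↔ v ∈ g⁻¹ • W := Set.mem_inv_smul_set_iff.symm
    _ ↔ g⁻¹ • W ∈ majority (halfspaces 𝒢) c (positiveHalfspaces 𝒢 o) := (hv _ hgW).symm
    _ ↔ W ∈ majority (halfspaces 𝒢) c (positiveHalfspaces 𝒢 o) :=
      smul_mem_majority_iff (smul_mem_halfspaces_iff hG.1 hact g⁻¹) (hinv g⁻¹)
        (smul_mem_positiveHalfspaces_iff hG.1 hact hpres g⁻¹) W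
    _ ↔ v ∈ W := hv W hW
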